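/- Let Λ be a symplectic lattice admitting an orthogonal direct sum decomposition Λ = U₁ ⊕ U₂ ⊕ Λ'' with U₁, U₂ isometric to U. For any subgroup Γ of Sp(Λ) containing Γ_Λ, with G the image of Γ under the reduction map Sp(Λ) → Sp(D_Λ), the assignment v ↦ [v*] induces a bijection from the set of Γ-equivalence classes of primitive vectors of Λ onto the quotient set D_Λ/G. -/

import Mathlib

noncomputable section

open Submodule

variable {V : Type} [AddCommGroup V] [Module ℚ V]

/-- The dual lattice `Λ^∨ = {v ∈ Λ⊗ℚ : (v, Λ) ⊆ ℤ}` of a lattice `L` (inside the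
ambient rational vector space `V = Λ⊗ℚ`) with respect to the form `B`. -/
def dualLattice (B : V →ₗ[ℚ] V →ₗ[ℚ] ℚ) (L : Submodule ℤ V) : Submodule ℤ V where
  carrier := {v : V | ∀ x ∈ L, ∃ n : ℤ, B v x = (n : ℚ)}
  zero_mem' := fun x _ => ⟨0, by simp⟩
  add_mem' := by
    intro a b ha hb x hx
    obtain ⟨n, hn⟩ := ha x hx
    obtain ⟨m, hm⟩ := hb x hx
    exact ⟨n + m, by rw [map_add, LinearMap.add_apply, hn, hm]; push_cast; ring⟩
  smul_mem' := by
    intro c a ha x hx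
    obtain ⟨n, hn⟩ := ha x hx
    refine ⟨c * n, ?_⟩
    have h1 : B (c • a) x = (B.flip x) (c • a) := rfl
    rw [h1, map_zsmul, LinearMap.flip_apply, hn, zsmul_eq_mul]
    push_cast; ring

/-- A vector `v` is primitive in the lattice `L` if `ℚv ∩ L = ℤv`. -/
def IsPrimitive (L : Submodule ℤ V) (v : V) : Prop :=
  v ∈ L ∧ (Submodule.span ℚ {v}).restrictScalars ℤ ⊓ L = Submodule.span ℤ {v}

/-- `div(v) = d`, i.e. the ideal `(v, L) ⊆ ℤ` is generated by the positive integer `d`. -/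
def HasDiv (B : V →ₗ[ℚ] V →ₗ[ℚ] ℚ) (L : Submodule ℤ V) (v : V) (d : ℕ) : Prop :=
  0 < d ∧ (∀ x ∈ L, ∃ n : ℤ, B v x = (n : ℚ) * (d : ℚ)) ∧ (∃ x ∈ L, B v x = (d : ℚ))

/-- `v* = v / div(v)`. -/
def vstar (v : V) (d : ℕ) : V := ((d : ℚ))⁻¹ • v

lemma vstar_mem {B : V →ₗ[ℚ] V →ₗ[ℚ] ℚ} {L : Submodule ℤ V} {v : V} {d : ℕ}
    (h : HasDiv B L v d) : vstar v d ∈ dualLattice B L := by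
  intro x hx
  obtain ⟨n, hn⟩ := h.2.1 x hx
  refine ⟨n, ?_⟩
  have hd : (d : ℚ) ≠ 0 := Nat.cast_ne_zero.mpr h.1.ne'
  show B (((d : ℚ))⁻¹ • v) x = (n : ℚ)
  rw [map_smul, LinearMap.smul_apply, hn, smul_eq_mul]
  field_simp

/-- The discriminant group `D_Λ = Λ^∨ / Λ`. -/
abbrev DiscGroup (B : V →ₗ[ℚ] V →ₗ[ℚ] ℚ) (L : Submodule ℤ V) :=
  dualLattice B L ⧸ (L.comap (dualLattice B L).subtype)

/-- The class of an element of the dual lattice in the discriminant group. -/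
def discCls (B : V →ₗ[ℚ] V →ₗ[ℚ] ℚ) (L : Submodule ℤ V) (v : dualLattice B L) :
    DiscGroup B L := Submodule.Quotient.mk v

/-- `γ` is an isometry of the lattice `L`, i.e. an element of `Sp(Λ)` (viewed as a
rational linear automorphism of the ambient space preserving `L` and the form). -/
def IsIsometry (B : V →ₗ[ℚ] V →ₗ[ℚ] ℚ) (L : Submodule ℤ V) (γ : V ≃ₗ[ℚ] V) : Prop :=
  (∀ v, v ∈ L ↔ γ v ∈ L) ∧ ∀ v w, B (γ v) (γ w) = B v w

/-- `γ` lies in `Γ_Λ`: it is an isometry of `L` acting trivially on the discriminant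
group, i.e. `γ(v) ≡ v mod Λ` for every `v ∈ Λ^∨`. -/
def InGamma (B : V →ₗ[ℚ] V →ₗ[ℚ] ℚ) (L : Submodule ℤ V) (γ : V ≃ₗ[ℚ] V) : Prop :=
  IsIsometry B L γ ∧ ∀ v ∈ dualLattice B L, γ v - v ∈ L

lemma isometry_dual_mem {B : V →ₗ[ℚ] V →ₗ[ℚ] ℚ} {L : Submodule ℤ V} {γ : V ≃ₗ[ℚ] V}
    (h : IsIsometry B L γ) {u : V} (hu : u ∈ dualLattice B L) :
    γ u ∈ dualLattice B L := by
  intro x hx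
  have hx' : γ.symm x ∈ L := by
    rw [h.1 (γ.symm x), LinearEquiv.apply_symm_apply]
    exact hx
  obtain ⟨n, hn⟩ := hu (γ.symm x) hx'
  refine ⟨n, ?_⟩
  have := h.2 u (γ.symm x)
  rw [LinearEquiv.apply_symm_apply] at this
  rw [this, hn]

/-- The transvection `T_{l,m} : v ↦ v + (l,v)m + (m,v)l` on the rational vector space. -/
def transvection (B : V →ₗ[ℚ] V →ₗ[ℚ] ℚ) (l m : V) : V →ₗ[ℚ] V :=
  LinearMap.id + (B l).smulRight m + (B m).smulRight l

/-- An orthogonal decomposition `Λ = U ⊕ Λ'` with `U` a hyperbolic plane spanned by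
`e, f` with `(e,f) = 1`. -/
def OrthoDecompU (B : V →ₗ[ℚ] V →ₗ[ℚ] ℚ) (L : Submodule ℤ V)
    (e f : V) (L' : Submodule ℤ V) : Prop :=
  e ∈ L ∧ f ∈ L ∧ L' ≤ L ∧ B e f = 1 ∧
  (∀ z ∈ L', B e z = 0 ∧ B f z = 0) ∧
  Submodule.span ℤ {e, f} ⊔ L' = L

/-- An orthogonal decomposition `Λ = U₁ ⊕ U₂ ⊕ Λ''` with `U₁, U₂` hyperbolic planes. -/
def OrthoDecompUU (B : V →ₗ[ℚ] V →ₗ[ℚ] ℚ) (L : Submodule ℤ V)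
    (e₁ f₁ e₂ f₂ : V) (L'' : Submodule ℤ V) : Prop :=
  e₁ ∈ L ∧ f₁ ∈ L ∧ e₂ ∈ L ∧ f₂ ∈ L ∧ L'' ≤ L ∧
  B e₁ f₁ = 1 ∧ B e₂ f₂ = 1 ∧
  B e₁ e₂ = 0 ∧ B e₁ f₂ = 0 ∧ B f₁ e₂ = 0 ∧ B f₁ f₂ = 0 ∧
  (∀ z ∈ L'', B e₁ z = 0 ∧ B f₁ z = 0 ∧ B e₂ z = 0 ∧ B f₂ z = 0) ∧
  Submodule.span ℤ {e₁, f₁} ⊔ Submodule.span ℤ {e₂, f₂} ⊔ L'' = L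

/-- An orthogonal decomposition `Λ = U ⊕ U(p) ⊕ ⋯ ⊕ U(p)`. -/
def OrthoDecompUUp (B : V →ₗ[ℚ] V →ₗ[ℚ] ℚ) (L : Submodule ℤ V) (p : ℕ)
    (e f : V) {ι : Type} (E F : ι → V) : Prop :=
  e ∈ L ∧ f ∈ L ∧ (∀ i, E i ∈ L) ∧ (∀ i, F i ∈ L) ∧
  B e f = 1 ∧ (∀ i, B (E i) (F i) = (p : ℚ)) ∧
  (∀ i, B e (E i) = 0 ∧ B e (F i) = 0 ∧ B f (E i) = 0 ∧ B f (F i) = 0) ∧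
  (∀ i j, i ≠ j → B (E i) (E j) = 0 ∧ B (E i) (F j) = 0 ∧ B (F i) (F j) = 0) ∧
  Submodule.span ℤ ({e, f} ∪ Set.range E ∪ Set.range F) = L

/-- An orthogonal decomposition `Λ = U(d₁) ⊕ ⋯ ⊕ U(d_g)`. -/
def OrthoDecompType (B : V →ₗ[ℚ] V →ₗ[ℚ] ℚ) (L : Submodule ℤ V) {g : ℕ}
    (d : Fin g → ℕ) (E F : Fin g → V) : Prop :=
  (∀ i, E i ∈ L) ∧ (∀ i, F i ∈ L) ∧
  (∀ i, B (E i) (F i) = (d i : ℚ)) ∧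
  (∀ i j, i ≠ j → B (E i) (E j) = 0 ∧ B (E i) (F j) = 0 ∧ B (F i) (F j) = 0) ∧
  Submodule.span ℤ (Set.range E ∪ Set.range F) = L

lemma coe_int_addCircle (n : ℤ) : (((n : ℚ) : AddCircle (1 : ℚ))) = 0 := by
  have hmem : ((n : ℚ)) ∈ AddSubgroup.zmultiples (1 : ℚ) := ⟨n, by simp⟩
  exact (QuotientAddGroup.eq_zero_iff _).mpr hmem

lemma bilin_antisymm (B : V →ₗ[ℚ] V →ₗ[ℚ] ℚ) (halt : ∀ v, B v v = 0) (a b : V) :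
    B a b = - B b a := by
  have h := halt (a + b)
  simp only [map_add, LinearMap.add_apply] at h
  rw [halt a, halt b] at h
  linarith

/-- The `ℚ/ℤ`-valued pairing on the dual lattice. -/
def rationalPairing (B : V →ₗ[ℚ] V →ₗ[ℚ] ℚ) (L : Submodule ℤ V) :
    dualLattice B L →ₗ[ℤ] dualLattice B L →ₗ[ℤ] AddCircle (1 : ℚ) :=
  LinearMap.mk₂ ℤ (fun v w => ((B v.1 w.1 : ℚ) : AddCircle (1 : ℚ)))
    (fun v v' w => by
      beta_reduce
      rw [Submodule.coe_add, map_add, LinearMap.add_apply]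
      exact QuotientAddGroup.mk_add (AddSubgroup.zmultiples (1 : ℚ)) _ _)
    (fun c v w => by
      beta_reduce
      have h1 : B ((c • v : dualLattice B L) : V) (w : V)
          = c • (B (v : V) (w : V)) := by
        have h2 : B ((c • v : dualLattice B L) : V) (w : V)
            = (B.flip (w : V)) ((c • v : dualLattice B L) : V) := rfl
        rw [h2, Submodule.coe_smul, map_zsmul, LinearMap.flip_apply]
      rw [h1]
      exact QuotientAddGroup.mk_zsmul (AddSubgroup.zmultiples (1 : ℚ)) _ _
    )
    (fun v w w' => by
      beta_reduce
      rw [Submodule.coe_add, map_add]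
      exact QuotientAddGroup.mk_add (AddSubgroup.zmultiples (1 : ℚ)) _ _)
    (fun c v w => by
      beta_reduce
      rw [Submodule.coe_smul, map_zsmul]
      exact QuotientAddGroup.mk_zsmul (AddSubgroup.zmultiples (1 : ℚ)) _ _)

/-- The discriminant form on `D_Λ`, with values in `ℚ/ℤ`. -/
def discForm (B : V →ₗ[ℚ] V →ₗ[ℚ] ℚ) (L : Submodule ℤ V) (halt : ∀ v, B v v = 0) :
    DiscGroup B L →ₗ[ℤ] DiscGroup B L →ₗ[ℤ] AddCircle (1 : ℚ) :=
  (Submodule.liftQ _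
    ((Submodule.liftQ _ (rationalPairing B L) (by
      intro v hv
      rw [LinearMap.mem_ker]
      refine LinearMap.ext fun w => ?_
      have hv' : (v : V) ∈ L := hv
      obtain ⟨n, hn⟩ := w.2 (v : V) hv'
      show ((B (v : V) (w : V) : ℚ) : AddCircle (1 : ℚ)) = 0
      have h3 : B (v : V) (w : V) = ((-n : ℤ) : ℚ) := by
        rw [bilin_antisymm B halt, hn]; push_cast; ring
      rw [h3]
      exact coe_int_addCircle _)).flip) (by
      intro w hw
      rw [LinearMap.mem_ker]
      refine LinearMap.ext fun x => ?_
      obtain ⟨v, rfl⟩ := Submodule.Quotient.mk_surjective _ x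
      have hw' : (w : V) ∈ L := hw
      obtain ⟨n, hn⟩ := v.2 (w : V) hw'
      show ((B (v : V) (w : V) : ℚ) : AddCircle (1 : ℚ)) = 0
      rw [hn]
      exact coe_int_addCircle _)).flip

/-- The orthogonal complement of a subgroup of the discriminant group with respect to
the discriminant form. -/
def discOrth (B : V →ₗ[ℚ] V →ₗ[ℚ] ℚ) (L : Submodule ℤ V) (halt : ∀ v, B v v = 0)
    (D' : Submodule ℤ (DiscGroup B L)) : Submodule ℤ (DiscGroup B L) :=
  ⨅ y ∈ D', LinearMap.ker ((discForm B L halt).flip y)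

/-- A splitting element of the discriminant group: `x` of order `d` lies in a subgroup
`D' ≅ (ℤ/d)²` with `D_Λ = D' ⊕ D'^⊥`. -/
def IsSplitElem (B : V →ₗ[ℚ] V →ₗ[ℚ] ℚ) (L : Submodule ℤ V) (halt : ∀ v, B v v = 0)
    (x : DiscGroup B L) : Prop :=
  ∃ D' : Submodule ℤ (DiscGroup B L), x ∈ D' ∧
    Nonempty (D' ≃+ (ZMod (addOrderOf x) × ZMod (addOrderOf x))) ∧
    D' ⊔ discOrth B L halt D' = ⊤ ∧ D' ⊓ discOrth B L halt D' = ⊥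

/-- The orthogonal complement `Λ₁^⊥ = {z ∈ Λ : (z, Λ₁) = 0}` of a sublattice inside `L`. -/
def orthCompIn (B : V →ₗ[ℚ] V →ₗ[ℚ] ℚ) (L L₁ : Submodule ℤ V) : Submodule ℤ V where
  carrier := {z | z ∈ L ∧ ∀ y ∈ L₁, B z y = 0}
  zero_mem' := ⟨L.zero_mem, fun y _ => by simp⟩
  add_mem' := by
    intro a b ha hb
    refine ⟨L.add_mem ha.1 hb.1, fun y hy => ?_⟩
    rw [map_add, LinearMap.add_apply, ha.2 y hy, hb.2 y hy, add_zero]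
  smul_mem' := by
    intro c a ha
    refine ⟨L.smul_mem c ha.1, fun y hy => ?_⟩
    have h1 : B (c • a) y = (B.flip y) (c • a) := rfl
    rw [h1, map_zsmul, LinearMap.flip_apply, ha.2 y hy, smul_zero]

/-- A splitting (primitive) vector: `v` lies in a rank 2 sublattice `Λ₁` with
`Λ = Λ₁ ⊕ Λ₁^⊥` (orthogonal direct sum). -/
def IsSplitVec (B : V →ₗ[ℚ] V →ₗ[ℚ] ℚ) (L : Submodule ℤ V) (v : V) : Prop :=
  ∃ L₁ : Submodule ℤ V, v ∈ L₁ ∧ L₁ ≤ L ∧ Module.finrank ℤ L₁ = 2 ∧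
    L₁ ⊔ orthCompIn B L L₁ = L ∧ L₁ ⊓ orthCompIn B L L₁ = ⊥

end

/-!
Write `a = v*`. The functional `(a, ·)` is integral on `Λ` and takes the value `1`, and the order of
`[a]` in `D_Λ` is `div(v)`; hence `v = div(v) a` is recovered from `a`, and it remains to see that
two such dual vectors `a`, `b` in the same class modulo `Λ` are `Γ_Λ`-equivalent.

* If `a` and `b` both pair to `1` with a common `f ∈ Λ`, put `n = (a, b)`. A power of the
  transvection along `f` moves `a` to `c = a + (n - 1) f`, which pairs to `1` with `b`, and then the
  transvection along `b - c` moves `c` to `b`.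
* Any `a` is equivalent to some `a + l` pairing to `1` with `f₁`: inside `U₂` there is a hyperbolic
  pair `(e, f)` with `e ⊥ a`, and adding multiples of `e` to a vector `h` with `(a, h) = 1` one may
  assume `(f, h) = -1`. Then `l` can be taken to be a multiple of `e₁ + (e₁, h) f`, which is
  orthogonal to `h`, so that the previous point applies with `h` in the role of the common vector.

So both `a` and `b` may be assumed to pair to `1` with `f₁`, where the first point finishes.
For surjectivity, any dual vector becomes one pairing to `1` with `f₁` after adding a multiple of
`e₁`.
-/

section

open MulAction

section Algebra

theorem exists_isCoprime_mul_add_mul_eq_zero {R : Type*} [CommRing R] [IsDomain R] [IsBezout R]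
    (x y : R) : ∃ p q : R, IsCoprime p q ∧ p * x + q * y = 0 := by
  classical
  let := IsBezout.toGCDDomain R
  obtain ⟨x', y', hx, hy, hunit⟩ := extract_gcd x y
  refine ⟨y', -x', ((gcd_isUnit_iff x' y').1 hunit).symm.neg_right, ?_⟩
  linear_combination y' * hx - x' * hy

theorem exists_ne_zero_smul_mem_of_mem_span {R K M : Type*} [CommRing R] [IsDomain R] [Field K]
    [Algebra R K] [IsFractionRing R K] [AddCommGroup M] [Module R M] [Module K M]
    [IsScalarTower R K M] (N : Submodule R M) {x : M} (hx : x ∈ Submodule.span K (N : Set M)) :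
    ∃ r : R, r ≠ 0 ∧ r • x ∈ N := by
  obtain ⟨y, hy, r, rfl⟩ := (IsLocalization.mem_span_iff (nonZeroDivisors R)).1 hx
  refine ⟨r, nonZeroDivisors.coe_ne_zero r, ?_⟩
  rw [← algebraMap_smul K (r : R), smul_smul, IsLocalization.mk'_spec', map_one, one_smul]
  rwa [Submodule.span_eq] at hy

end Algebra

variable {V : Type} [AddCommGroup V] [Module ℚ V] {B : V →ₗ[ℚ] V →ₗ[ℚ] ℚ} {L : Submodule ℤ V}

section Isometries

theorem IsIsometry.one : IsIsometry B L 1 :=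
  ⟨fun _ => Iff.rfl, fun _ _ => rfl⟩

theorem IsIsometry.mul {γ δ : V ≃ₗ[ℚ] V} (hγ : IsIsometry B L γ) (hδ : IsIsometry B L δ) :
    IsIsometry B L (γ * δ) :=
  ⟨fun v => (hδ.1 v).trans (hγ.1 (δ v)), fun v w => (hγ.2 (δ v) (δ w)).trans (hδ.2 v w)⟩

theorem IsIsometry.inv {γ : V ≃ₗ[ℚ] V} (hγ : IsIsometry B L γ) : IsIsometry B L γ⁻¹ := by
  refine ⟨fun v => ?_, fun v w => ?_⟩
  · rw [hγ.1 (γ⁻¹ v), ← LinearEquiv.mul_apply, mul_inv_cancel, LinearEquiv.coe_one, id_eq]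
  · rw [← hγ.2, ← LinearEquiv.mul_apply, ← LinearEquiv.mul_apply, mul_inv_cancel,
      LinearEquiv.coe_one, id_eq, id_eq]

/-- The group `Γ_Λ` of isometries of `Λ` acting trivially on the discriminant group, as a subgroup
of the linear automorphisms of `Λ ⊗ ℚ`, so that equivalence of vectors is membership in an orbit. -/
def discriminantKernel (B : V →ₗ[ℚ] V →ₗ[ℚ] ℚ) (L : Submodule ℤ V) : Subgroup (V ≃ₗ[ℚ] V) where
  carrier := {γ | InGamma B L γ}
  one_mem' := ⟨.one, fun v _ => by simp⟩
  mul_mem' {γ δ} hγ hδ := by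
    refine ⟨hγ.1.mul hδ.1, fun v hv => ?_⟩
    rw [LinearEquiv.mul_apply, ← sub_add_sub_cancel _ (δ v)]
    exact L.add_mem (hγ.2 _ (isometry_dual_mem hδ.1 hv)) (hδ.2 v hv)
  inv_mem' {γ} hγ := by
    refine ⟨hγ.1.inv, fun v hv => ?_⟩
    have h := L.neg_mem (hγ.2 _ (isometry_dual_mem hγ.1.inv hv))
    rwa [← LinearEquiv.mul_apply, mul_inv_cancel, LinearEquiv.coe_one, id_eq, neg_sub] at h

theorem discriminantKernel.sub_mem_of_mem_orbit {a b : V} (ha : a ∈ dualLattice B L)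
    (hb : b ∈ orbit (discriminantKernel B L) a) : b - a ∈ L := by
  obtain ⟨γ, rfl⟩ := hb
  exact γ.2.2 a ha

end Isometries

section Transvections

/-- The symplectic transvection `x ↦ x + k (l, x) l`, the `k`-th power of the transvection along
`l`. The coefficient is an integer so that `Λ` is preserved when `l ∈ Λ`. -/
def symplecticTransvection (hB : B.IsAlt) (l : V) (k : ℤ) : V ≃ₗ[ℚ] V :=
  LinearEquiv.transvection (f := k • B l) (v := l) (by simp [hB.self_eq_zero])

theorem symplecticTransvection_apply (hB : B.IsAlt) (l : V) (k : ℤ) (x : V) :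
    symplecticTransvection hB l k x = x + (k * B l x) • l := by
  simp [symplecticTransvection, LinearMap.transvection.apply]

theorem symplecticTransvection_isometry (hB : B.IsAlt) (l : V) (k : ℤ) (x y : V) :
    B (symplecticTransvection hB l k x) (symplecticTransvection hB l k y) = B x y := by
  simp only [symplecticTransvection_apply, map_add, map_smul, LinearMap.add_apply,
    LinearMap.smul_apply, smul_eq_mul, hB.self_eq_zero, ← hB.neg l x]
  ring

theorem symplecticTransvection_mem_discriminantKernel (hB : B.IsAlt) (hL : L ≤ dualLattice B L)
    {l : V} (hl : l ∈ L) (k : ℤ) : symplecticTransvection hB l k ∈ discriminantKernel B L := by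
  set T := symplecticTransvection hB l k
  have sub_mem (x : V) (hx : ∃ n : ℤ, B l x = n) : T x - x ∈ L := by
    obtain ⟨n, hn⟩ := hx
    rw [symplecticTransvection_apply, add_sub_cancel_left, hn, ← Int.cast_mul,
      Int.cast_smul_eq_zsmul]
    exact L.smul_mem _ hl
  have apply_T (x : V) : B l (T x) = B l x := by
    simp [T, symplecticTransvection_apply, hB.self_eq_zero]
  refine ⟨⟨fun x => ⟨fun hx => ?_, fun hx => ?_⟩, symplecticTransvection_isometry hB l k⟩,
    fun x hx => sub_mem x ?_⟩
  · exact (L.sub_mem_iff_left hx).1 (sub_mem x (hL hl x hx))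
  · exact (L.sub_mem_iff_right hx).1 (sub_mem x (apply_T x ▸ hL hl (T x) hx))
  · obtain ⟨n, hn⟩ := hx l hl
    exact ⟨-n, by rw [← hB.neg, hn, Int.cast_neg]⟩

theorem discriminantKernel.add_zsmul_mem_orbit (hB : B.IsAlt) (hL : L ≤ dualLattice B L)
    {a f : V} (hf : f ∈ L) (haf : B a f = 1) (k : ℤ) :
    a + k • f ∈ orbit (discriminantKernel B L) a := by
  refine ⟨⟨_, symplecticTransvection_mem_discriminantKernel hB hL hf (-k)⟩, ?_⟩
  change symplecticTransvection hB f (-k) a = _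
  rw [symplecticTransvection_apply, ← hB.neg, haf, ← Int.cast_smul_eq_zsmul ℚ k]
  simp

theorem discriminantKernel.mem_orbit_of_apply_eq_one (hB : B.IsAlt) (hL : L ≤ dualLattice B L)
    {a b : V} (hab : b - a ∈ L) (h : B a b = 1) : b ∈ orbit (discriminantKernel B L) a := by
  refine ⟨⟨_, symplecticTransvection_mem_discriminantKernel hB hL hab (-1)⟩, ?_⟩
  change symplecticTransvection hB (b - a) (-1) a = b
  rw [symplecticTransvection_apply, map_sub, LinearMap.sub_apply, hB.self_eq_zero, ← hB.neg, h]
  simp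

theorem discriminantKernel.mem_orbit_of_common_apply_eq_one (hB : B.IsAlt)
    (hL : L ≤ dualLattice B L) {a b f : V} (ha : a ∈ dualLattice B L) (hab : b - a ∈ L)
    (hf : f ∈ L) (haf : B a f = 1) (hbf : B b f = 1) : b ∈ orbit (discriminantKernel B L) a := by
  obtain ⟨n, hn⟩ := ha _ hab
  rw [map_sub, hB.self_eq_zero, sub_zero] at hn
  have hc := discriminantKernel.add_zsmul_mem_orbit hB hL hf haf (n - 1)
  have hcb : B (a + (n - 1) • f) b = 1 := by
    rw [← Int.cast_smul_eq_zsmul ℚ, map_add, map_smul, LinearMap.add_apply, LinearMap.smul_apply,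
      hn, ← hB.neg, hbf]
    push_cast
    simp
  have hbc : b - (a + (n - 1) • f) ∈ L := by
    rw [← sub_sub]
    exact L.sub_mem hab (L.smul_mem _ hf)
  exact orbit_eq_iff.2 hc ▸ discriminantKernel.mem_orbit_of_apply_eq_one hB hL hbc hcb

end Transvections

section HyperbolicPairs

/-- A hyperbolic pair of `Λ`: vectors of `Λ` with `(e, f) = 1`, that is, the standard basis of a
copy of `U` in `Λ`. -/
structure IsHyperbolicPair (B : V →ₗ[ℚ] V →ₗ[ℚ] ℚ) (L : Submodule ℤ V) (e f : V) : Prop where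
  left_mem : e ∈ L
  right_mem : f ∈ L
  apply_eq_one : B e f = 1

theorem IsHyperbolicPair.exists_left_orthogonal (hB : B.IsAlt) {a e f : V}
    (ha : a ∈ dualLattice B L) (h : IsHyperbolicPair B L e f) :
    ∃ e' f', IsHyperbolicPair B L e' f' ∧ B a e' = 0 ∧ f' ∈ Submodule.span ℤ {e, f} := by
  obtain ⟨x, hx⟩ := ha e h.left_mem
  obtain ⟨y, hy⟩ := ha f h.right_mem
  obtain ⟨p, q, ⟨s, t, hst⟩, hpq⟩ := exists_isCoprime_mul_add_mul_eq_zero x y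
  have mem (m n : ℤ) : m • e + n • f ∈ L :=
    L.add_mem (L.smul_mem m h.left_mem) (L.smul_mem n h.right_mem)
  refine ⟨p • e + q • f, (-t) • e + s • f, ⟨mem p q, mem (-t) s, ?_⟩, ?_,
    Submodule.mem_span_pair.2 ⟨-t, s, rfl⟩⟩ <;>
    simp only [← Int.cast_smul_eq_zsmul ℚ, map_add, map_smul, LinearMap.add_apply,
      LinearMap.smul_apply, smul_eq_mul]
  · rw [hB.self_eq_zero, hB.self_eq_zero, ← hB.neg e f, h.apply_eq_one]
    have hst' : (s * p + t * q : ℚ) = 1 := mod_cast hst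
    push_cast
    linear_combination hst'
  · rw [hx, hy]
    exact_mod_cast hpq

variable {e₁ f₁ e₂ f₂ : V}

theorem discriminantKernel.exists_mem_orbit_apply_eq_one (hB : B.IsAlt) (hL : L ≤ dualLattice B L)
    (h₁ : IsHyperbolicPair B L e₁ f₁) (h₂ : IsHyperbolicPair B L e₂ f₂) (hfe : B f₁ e₂ = 0)
    (hff : B f₁ f₂ = 0) {a : V} (ha : a ∈ dualLattice B L) (hau : ∃ g ∈ L, B a g = 1) :
    ∃ c ∈ orbit (discriminantKernel B L) a, B c f₁ = 1 := by
  obtain ⟨e, f, hef, hae, hf⟩ := h₂.exists_left_orthogonal hB ha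
  have hff₁ : B f f₁ = 0 := by
    obtain ⟨s, t, rfl⟩ := Submodule.mem_span_pair.1 hf
    rw [hB.eq_iff]
    simp [hfe, hff]
  obtain ⟨h, hh, hah, hfh⟩ : ∃ h ∈ L, B a h = 1 ∧ B f h = -1 := by
    obtain ⟨g, hg, hag⟩ := hau
    obtain ⟨r, hr⟩ := hL hef.right_mem g hg
    refine ⟨g + (r + 1) • e, L.add_mem hg (L.smul_mem _ hef.left_mem), ?_, ?_⟩ <;>
      rw [← Int.cast_smul_eq_zsmul ℚ, map_add, map_smul]
    · rw [hag, hae, smul_zero, add_zero]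
    · rw [hr, ← hB.neg, hef.apply_eq_one]
      push_cast
      simp
  obtain ⟨u, hu⟩ := hL h₁.left_mem h hh
  obtain ⟨w, hw⟩ := ha f₁ h₁.right_mem
  set l := (1 - w) • (e₁ + u • f) with hl
  have hl_mem : l ∈ L :=
    L.smul_mem _ (L.add_mem h₁.left_mem (L.smul_mem _ hef.right_mem))
  have hlh : B l h = 0 := by
    simp [hl, ← Int.cast_smul_eq_zsmul ℚ, hu, hfh]
  have hlf₁ : B l f₁ = 1 - w := by
    simp [hl, ← Int.cast_smul_eq_zsmul ℚ, h₁.apply_eq_one, hff₁]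
  refine ⟨a + l, discriminantKernel.mem_orbit_of_common_apply_eq_one hB hL ha ?_ hh hah ?_, ?_⟩
  · rwa [add_sub_cancel_left]
  · rw [map_add, LinearMap.add_apply, hah, hlh, add_zero]
  · rw [map_add, LinearMap.add_apply, hw, hlf₁, add_sub_cancel]

theorem discriminantKernel.mem_orbit_of_sub_mem (hB : B.IsAlt) (hL : L ≤ dualLattice B L)
    (h₁ : IsHyperbolicPair B L e₁ f₁) (h₂ : IsHyperbolicPair B L e₂ f₂) (hfe : B f₁ e₂ = 0)
    (hff : B f₁ f₂ = 0) {a b : V} (ha : a ∈ dualLattice B L) (hau : ∃ g ∈ L, B a g = 1)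
    (hb : b ∈ dualLattice B L) (hbu : ∃ g ∈ L, B b g = 1) (hab : b - a ∈ L) :
    b ∈ orbit (discriminantKernel B L) a := by
  obtain ⟨c, hca, hc⟩ :=
    discriminantKernel.exists_mem_orbit_apply_eq_one hB hL h₁ h₂ hfe hff ha hau
  obtain ⟨c', hcb, hc'⟩ :=
    discriminantKernel.exists_mem_orbit_apply_eq_one hB hL h₁ h₂ hfe hff hb hbu
  have hca_mem := discriminantKernel.sub_mem_of_mem_orbit ha hca
  have hcb_mem := discriminantKernel.sub_mem_of_mem_orbit hb hcb
  have hc_dual : c ∈ dualLattice B L := (Submodule.sub_mem_iff_left _ ha).1 (hL hca_mem)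
  have hcc' : c' - c ∈ L := by
    have h := L.sub_mem (L.add_mem hcb_mem hab) hca_mem
    rwa [sub_add_sub_cancel, sub_sub_sub_cancel_right] at h
  have hc'c :=
    discriminantKernel.mem_orbit_of_common_apply_eq_one hB hL hc_dual hcc' h₁.right_mem hc hc'
  rw [← orbit_eq_iff] at hca hcb hc'c ⊢
  exact hcb.symm.trans (hc'c.trans hca)

end HyperbolicPairs

section Divisibility

variable {v : V} {d : ℕ}

theorem nsmul_vstar (hd : d ≠ 0) : d • vstar v d = v := by
  rw [vstar, ← Nat.cast_smul_eq_nsmul ℚ, smul_inv_smul₀ (Nat.cast_ne_zero.2 hd)]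

theorem vstar_nsmul (hd : d ≠ 0) : vstar (d • v) d = v := by
  rw [vstar, ← Nat.cast_smul_eq_nsmul ℚ, inv_smul_smul₀ (Nat.cast_ne_zero.2 hd)]

theorem map_vstar (γ : V ≃ₗ[ℚ] V) (v : V) (d : ℕ) : γ (vstar v d) = vstar (γ v) d :=
  map_smul γ _ v

theorem HasDiv.dvd {d' : ℕ} (h : HasDiv B L v d) (h' : HasDiv B L v d') : d ∣ d' := by
  obtain ⟨x, hx, hvx⟩ := h'.2.2
  obtain ⟨n, hn⟩ := h.2.1 x hx
  exact Int.natCast_dvd_natCast.1 ⟨n, by rw [mul_comm]; exact_mod_cast hvx.symm.trans hn⟩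

theorem HasDiv.unique {d' : ℕ} (h : HasDiv B L v d) (h' : HasDiv B L v d') : d = d' :=
  Nat.dvd_antisymm (h.dvd h') (h'.dvd h)

theorem HasDiv.map {γ : V ≃ₗ[ℚ] V} (h : HasDiv B L v d) (hγ : IsIsometry B L γ) :
    HasDiv B L (γ v) d := by
  refine ⟨h.1, fun x hx => ?_, ?_⟩
  · obtain ⟨y, rfl⟩ := γ.surjective x
    rw [hγ.2]
    exact h.2.1 y ((hγ.1 y).2 hx)
  · obtain ⟨x, hx, hvx⟩ := h.2.2
    exact ⟨γ x, (hγ.1 x).1 hx, (hγ.2 v x).trans hvx⟩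

theorem HasDiv.exists_vstar_apply_eq_one (h : HasDiv B L v d) :
    ∃ x ∈ L, B (vstar v d) x = 1 := by
  obtain ⟨x, hx, hvx⟩ := h.2.2
  refine ⟨x, hx, ?_⟩
  rw [vstar, map_smul, LinearMap.smul_apply, hvx, smul_eq_mul,
    inv_mul_cancel₀ (Nat.cast_ne_zero.2 h.1.ne')]

theorem HasDiv.ne_zero (h : HasDiv B L v d) : v ≠ 0 := by
  rintro rfl
  obtain ⟨x, -, hx⟩ := h.2.2
  rw [map_zero, LinearMap.zero_apply] at hx
  exact h.1.ne (mod_cast hx)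

theorem hasDiv_nsmul {a f : V} (ha : a ∈ dualLattice B L) (hf : f ∈ L) (haf : B a f = 1)
    (hd : 0 < d) : HasDiv B L (d • a) d := by
  refine ⟨hd, fun x hx => ?_, f, hf, by simp [haf]⟩
  obtain ⟨n, hn⟩ := ha x hx
  exact ⟨n, by simp [hn, mul_comm]⟩

theorem isPrimitive_iff :
    IsPrimitive L v ↔ v ∈ L ∧ ∀ c : ℚ, c • v ∈ L → ∃ n : ℤ, n • v = c • v := by
  refine and_congr_right fun hv => ⟨fun h c hc => ?_, fun h => le_antisymm ?_ ?_⟩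
  · have hcv : c • v ∈ Submodule.span ℤ {v} :=
      h ▸ ⟨Submodule.smul_mem _ c (Submodule.mem_span_singleton_self v), hc⟩
    exact Submodule.mem_span_singleton.1 hcv
  · rintro x ⟨hx, hxL⟩
    obtain ⟨c, rfl⟩ := Submodule.mem_span_singleton.1 hx
    exact Submodule.mem_span_singleton.2 (h c hxL)
  · rw [Submodule.span_singleton_le_iff_mem]
    exact ⟨Submodule.mem_span_singleton_self (R := ℚ) v, hv⟩

theorem IsPrimitive.map {γ : V ≃ₗ[ℚ] V} (h : IsPrimitive L v) (hγ : IsIsometry B L γ) :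
    IsPrimitive L (γ v) := by
  rw [isPrimitive_iff] at h ⊢
  refine ⟨(hγ.1 v).1 h.1, fun c hc => ?_⟩
  rw [← map_smul, ← hγ.1] at hc
  obtain ⟨n, hn⟩ := h.2 c hc
  exact ⟨n, by rw [← map_zsmul, hn, map_smul]⟩

end Divisibility

section DiscriminantGroup

theorem discCls_eq_iff {x y : dualLattice B L} :
    discCls B L x = discCls B L y ↔ (x : V) - y ∈ L :=
  Submodule.Quotient.eq _

theorem zsmul_discCls_eq_zero_iff {x : dualLattice B L} {m : ℤ} :
    m • discCls B L x = 0 ↔ m • (x : V) ∈ L :=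
  Submodule.Quotient.mk_eq_zero (x := m • x) _

theorem isOfFinAddOrder_discCls (hspan : Submodule.span ℚ (L : Set V) = ⊤)
    (x : dualLattice B L) : IsOfFinAddOrder (discCls B L x) := by
  obtain ⟨m, hm, hmx⟩ :=
    exists_ne_zero_smul_mem_of_mem_span L (x := (x : V)) (hspan ▸ Submodule.mem_top)
  exact isOfFinAddOrder_iff_zsmul_eq_zero.2 ⟨m, hm, zsmul_discCls_eq_zero_iff.2 hmx⟩

theorem addOrderOf_discCls_vstar {v : V} {d : ℕ} (hv : IsPrimitive L v) (hd : HasDiv B L v d) :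
    addOrderOf (discCls B L ⟨vstar v d, vstar_mem hd⟩) = d := by
  set x := discCls B L ⟨vstar v d, vstar_mem hd⟩ with hx
  refine Nat.dvd_antisymm (addOrderOf_dvd_of_nsmul_eq_zero ?_) ?_
  · rw [← natCast_zsmul, hx, zsmul_discCls_eq_zero_iff, natCast_zsmul, nsmul_vstar hd.1.ne']
    exact hv.1
  · have hmem : ((addOrderOf x : ℤ) • vstar v d) ∈ L :=
      zsmul_discCls_eq_zero_iff.1 (by rw [natCast_zsmul, addOrderOf_nsmul_eq_zero])
    rw [vstar, ← Int.cast_smul_eq_zsmul ℚ, smul_smul] at hmem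
    obtain ⟨n, hn⟩ := (isPrimitive_iff.1 hv).2 _ hmem
    rw [← Int.cast_smul_eq_zsmul ℚ] at hn
    have hn' : (n : ℚ) = _ := smul_left_injective ℚ hd.ne_zero hn
    rw [← div_eq_mul_inv, eq_div_iff (Nat.cast_ne_zero.2 hd.1.ne')] at hn'
    exact Int.natCast_dvd_natCast.1 ⟨n, by rw [mul_comm]; exact_mod_cast hn'.symm⟩

theorem isPrimitive_addOrderOf_nsmul (hL : L ≤ dualLattice B L) (a : dualLattice B L) {f : V}
    (hf : f ∈ L) (haf : B a f = 1) :
    IsPrimitive L (addOrderOf (discCls B L a) • (a : V)) := by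
  set d := addOrderOf (discCls B L a) with hd
  refine isPrimitive_iff.2 ⟨?_, fun c hc => ?_⟩
  · rw [← natCast_zsmul, ← zsmul_discCls_eq_zero_iff, natCast_zsmul, addOrderOf_nsmul_eq_zero]
  · obtain ⟨m, hm⟩ := hL hc f hf
    have hcd : c • d • (a : V) = m • (a : V) := by
      rw [← Int.cast_smul_eq_zsmul ℚ m, ← hm, ← Nat.cast_smul_eq_nsmul ℚ, smul_smul]
      simp [haf]
    rw [hcd, ← zsmul_discCls_eq_zero_iff, ← addOrderOf_dvd_iff_zsmul_eq_zero, ← hd] at hc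
    obtain ⟨n, rfl⟩ := hc
    exact ⟨n, by rw [hcd, mul_comm, mul_smul, natCast_zsmul]⟩

theorem exists_isPrimitive_discCls_vstar_eq (hL : L ≤ dualLattice B L)
    (hspan : Submodule.span ℚ (L : Set V) = ⊤) {e f : V} (h : IsHyperbolicPair B L e f)
    (x : DiscGroup B L) :
    ∃ (v : V) (d : ℕ) (_ : IsPrimitive L v) (hd : HasDiv B L v d),
      discCls B L ⟨vstar v d, vstar_mem hd⟩ = x := by
  obtain ⟨u, rfl⟩ := Submodule.Quotient.mk_surjective _ x
  obtain ⟨k, hk⟩ := u.2 f h.right_mem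
  have hl : (1 - k) • e ∈ L := L.smul_mem _ h.left_mem
  let a : dualLattice B L := u + ⟨(1 - k) • e, hL hl⟩
  have haf : B a f = 1 := by
    simp [a, ← Int.cast_smul_eq_zsmul ℚ, hk, h.apply_eq_one]
  have hpos := (isOfFinAddOrder_discCls hspan a).addOrderOf_pos
  refine ⟨_, _, isPrimitive_addOrderOf_nsmul hL a h.right_mem haf,
    hasDiv_nsmul a.2 h.right_mem haf hpos, discCls_eq_iff.2 ?_⟩
  simpa only [vstar_nsmul hpos.ne', a, Submodule.coe_add, add_sub_cancel_left] using hl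

end DiscriminantGroup

section EichlerCriterion

variable {e₁ f₁ e₂ f₂ : V}

theorem discriminantKernel.mem_orbit_of_discCls_vstar_eq (hB : B.IsAlt) (hL : L ≤ dualLattice B L)
    (h₁ : IsHyperbolicPair B L e₁ f₁) (h₂ : IsHyperbolicPair B L e₂ f₂) (hfe : B f₁ e₂ = 0)
    (hff : B f₁ f₂ = 0) {v w : V} {dv dw : ℕ} (hv : IsPrimitive L v) (hw : IsPrimitive L w)
    (hdv : HasDiv B L v dv) (hdw : HasDiv B L w dw)
    (h : discCls B L ⟨vstar v dv, vstar_mem hdv⟩ = discCls B L ⟨vstar w dw, vstar_mem hdw⟩) :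
    w ∈ orbit (discriminantKernel B L) v := by
  obtain rfl : dv = dw := by
    rw [← addOrderOf_discCls_vstar hv hdv, h, addOrderOf_discCls_vstar hw hdw]
  obtain ⟨γ, hγ⟩ := mem_orbit_iff.1 <| discriminantKernel.mem_orbit_of_sub_mem hB hL h₁ h₂ hfe hff
    (vstar_mem hdv) hdv.exists_vstar_apply_eq_one (vstar_mem hdw) hdw.exists_vstar_apply_eq_one
    (discCls_eq_iff.1 h.symm)
  refine mem_orbit_iff.2 ⟨γ, ?_⟩
  calc γ • v = γ • dv • vstar v dv := by rw [nsmul_vstar hdv.1.ne']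
    _ = dv • γ • vstar v dv := map_nsmul (γ : V ≃ₗ[ℚ] V) _ _
    _ = w := by rw [hγ, nsmul_vstar hdv.1.ne']

theorem symplectic_eichler_criterion_subgroup_general (hB : B.IsAlt) (hL : L ≤ dualLattice B L)
    (hspan : Submodule.span ℚ (L : Set V) = ⊤) (h₁ : IsHyperbolicPair B L e₁ f₁)
    (h₂ : IsHyperbolicPair B L e₂ f₂) (hfe : B f₁ e₂ = 0) (hff : B f₁ f₂ = 0)
    (Γ : Set (V ≃ₗ[ℚ] V)) (hΓsp : ∀ γ ∈ Γ, IsIsometry B L γ)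
    (hΓgamma : ∀ γ : V ≃ₗ[ℚ] V, InGamma B L γ → γ ∈ Γ)
    (hΓmul : ∀ γ₁ ∈ Γ, ∀ γ₂ ∈ Γ, γ₁ * γ₂ ∈ Γ) :
    (∀ (v w : V) (dv dw : ℕ) (_ : IsPrimitive L v) (_ : IsPrimitive L w)
        (hdv : HasDiv B L v dv) (hdw : HasDiv B L w dw),
        (∃ γ ∈ Γ, γ v = w) ↔
          ∃ γ, ∃ hγ : γ ∈ Γ,
            discCls B L ⟨γ (vstar v dv), isometry_dual_mem (hΓsp γ hγ) (vstar_mem hdv)⟩ =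
              discCls B L ⟨vstar w dw, vstar_mem hdw⟩) ∧
    (∀ x : DiscGroup B L, ∃ (v : V) (d : ℕ) (_ : IsPrimitive L v) (hd : HasDiv B L v d),
        discCls B L ⟨vstar v d, vstar_mem hd⟩ = x) := by
  refine ⟨fun v w dv dw hv hw hdv hdw => ⟨?_, ?_⟩,
    exists_isPrimitive_discCls_vstar_eq hL hspan h₁⟩
  · rintro ⟨γ, hγ, rfl⟩
    obtain rfl := (hdv.map (hΓsp γ hγ)).unique hdw
    exact ⟨γ, hγ, by simp only [map_vstar]⟩
  · rintro ⟨γ, hγ, h⟩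
    have hγ_iso := hΓsp γ hγ
    simp only [map_vstar] at h
    obtain ⟨δ, hδ⟩ := discriminantKernel.mem_orbit_of_discCls_vstar_eq hB hL h₁ h₂ hfe hff
      (hv.map hγ_iso) hw (hdv.map hγ_iso) hdw h
    exact ⟨δ * γ, hΓmul _ (hΓgamma δ δ.2) _ hγ, hδ⟩

end EichlerCriterion

end

/-- For any subgroup `Γ` with `Γ_Λ ≤ Γ ≤ Sp(Λ)`, the assignment `v ↦ [v*]` induces a
bijection from the `Γ`-equivalence classes of primitive vectors onto `D_Λ / G`, where
`G` is the image of `Γ` in `Sp(D_Λ)`. -/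
theorem symplectic_eichler_criterion_subgroup
    (V : Type) [AddCommGroup V] [Module ℚ V]
    (B : V →ₗ[ℚ] V →ₗ[ℚ] ℚ)
    (halt : ∀ v, B v v = 0)
    (hnd : ∀ v : V, (∀ w, B v w = 0) → v = 0)
    (L : Submodule ℤ V) (hfg : L.FG)
    (hspan : Submodule.span ℚ (L : Set V) = ⊤)
    (hint : ∀ x ∈ L, ∀ y ∈ L, ∃ n : ℤ, B x y = (n : ℚ))
    (e₁ f₁ e₂ f₂ : V) (L'' : Submodule ℤ V)
    (hdec : OrthoDecompUU B L e₁ f₁ e₂ f₂ L'')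
    (Γ : Set (V ≃ₗ[ℚ] V))
    (hΓsp : ∀ γ ∈ Γ, IsIsometry B L γ)
    (hΓgamma : ∀ γ : V ≃ₗ[ℚ] V, InGamma B L γ → γ ∈ Γ)
    (hΓone : (1 : V ≃ₗ[ℚ] V) ∈ Γ)
    (hΓmul : ∀ γ₁ ∈ Γ, ∀ γ₂ ∈ Γ, γ₁ * γ₂ ∈ Γ)
    (hΓinv : ∀ γ ∈ Γ, γ⁻¹ ∈ Γ) :
    (∀ (v w : V) (dv dw : ℕ) (hv : IsPrimitive L v) (hw : IsPrimitive L w)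
        (hdv : HasDiv B L v dv) (hdw : HasDiv B L w dw),
        (∃ γ ∈ Γ, γ v = w) ↔
          ∃ γ, ∃ hγ : γ ∈ Γ,
            discCls B L ⟨γ (vstar v dv), isometry_dual_mem (hΓsp γ hγ) (vstar_mem hdv)⟩ =
              discCls B L ⟨vstar w dw, vstar_mem hdw⟩) ∧
    (∀ x : DiscGroup B L, ∃ (v : V) (d : ℕ) (hv : IsPrimitive L v) (hd : HasDiv B L v d),
        discCls B L ⟨vstar v d, vstar_mem hd⟩ = x) := by
  obtain ⟨he₁, hf₁, he₂, hf₂, -, h₁, h₂, -, -, hfe, hff, -, -⟩ := hdec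
  exact symplectic_eichler_criterion_subgroup_general halt hint hspan ⟨he₁, hf₁, h₁⟩
    ⟨he₂, hf₂, h₂⟩ hfe hff Γ hΓsp hΓgamma hΓmul
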